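/- arXiv:2512.03160 — 9 statements merged into one kernel-verified Lean document; each statement's English description precedes it below -/
import Mathlib

section
/- Let A ∈ ℝ^{n×n}. If there exist a real matrix P ∈ ℝ^{m×n} of full column rank (rank(P) = n, m ≥ n) and a real matrix Q ∈ ℝ^{m×m} such that P·A = Q·P and μ_∞(Q) < 0, then every complex eigenvalue λ of A (i.e., of the complexification of A) satisfies Re(λ) < 0; equivalently, the continuous-time linear system ẋ = A x is asymptotically stable. -/
open Matrix Finset

/-- Logarithmic norm induced by the vector ∞-norm: `μ_∞(Q) = max_i (Q i i + ∑_{j≠i} |Q i j|)`. -/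
noncomputable def muInf {m : ℕ} (Q : Matrix (Fin m) (Fin m) ℝ) : ℝ :=
  ⨆ i, (Q i i + ∑ j ∈ Finset.univ.filter (fun j => j ≠ i), |Q i j|)

/-- Induced matrix ∞-norm: `‖Q‖_∞ = max_i ∑_j |Q i j|`. -/
noncomputable def normInf {m p : ℕ} (Q : Matrix (Fin m) (Fin p) ℝ) : ℝ :=
  ⨆ i, ∑ j, |Q i j|

/-- Vector ∞-norm: `‖v‖_∞ = max_i |v i|`. -/
noncomputable def vecNormInf {m : ℕ} (v : Fin m → ℝ) : ℝ := ⨆ i, |v i|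

/-- Metzlerization `Q^m`: keep the diagonal, take absolute values off-diagonal. -/
def metzlerize {m : ℕ} (Q : Matrix (Fin m) (Fin m) ℝ) : Matrix (Fin m) (Fin m) ℝ :=
  Matrix.of fun i j => if i = j then Q i j else |Q i j|

/-- Entrywise absolute value `|M|`. -/
def matAbs {p q : ℕ} (M : Matrix (Fin p) (Fin q) ℝ) : Matrix (Fin p) (Fin q) ℝ :=
  Matrix.of fun i j => |M i j|

/-- Entrywise positive part `M⁺`. -/
def matPos {p q : ℕ} (M : Matrix (Fin p) (Fin q) ℝ) : Matrix (Fin p) (Fin q) ℝ :=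
  Matrix.of fun i j => max (M i j) 0

/-- Entrywise negative part `M⁻ := M⁺ − M`. -/
def matNeg {p q : ℕ} (M : Matrix (Fin p) (Fin q) ℝ) : Matrix (Fin p) (Fin q) ℝ :=
  matPos M - M

/-- `Q↑ := Q^d + (Q^{nd})⁺` (diagonal plus positive part of the off-diagonal). -/
def matUp {m : ℕ} (Q : Matrix (Fin m) (Fin m) ℝ) : Matrix (Fin m) (Fin m) ℝ :=
  Matrix.of fun i j => if i = j then Q i j else max (Q i j) 0

/-- `Q↓ := (Q^{nd})⁻` (negative part of the off-diagonal). -/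
def matDown {m : ℕ} (Q : Matrix (Fin m) (Fin m) ℝ) : Matrix (Fin m) (Fin m) ℝ :=
  Matrix.of fun i j => if i = j then 0 else max (Q i j) 0 - Q i j

/-- existence of full-column-rank `P` and `Q` with `P A = Q P`, `μ_∞(Q) < 0`
implies Hurwitz stability of `A`. -/
theorem hurwitz_of_polyhedral_lyapunov {n m : ℕ} (hnm : n ≤ m)
    (A : Matrix (Fin n) (Fin n) ℝ) (P : Matrix (Fin m) (Fin n) ℝ)
    (Q : Matrix (Fin m) (Fin m) ℝ) (hrank : P.rank = n)
    (hPA : P * A = Q * P) (hQ : muInf Q < 0) :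
    ∀ lam ∈ spectrum ℂ (A.map (algebraMap ℝ ℂ)), lam.re < 0 := by
  intro lam hlam
  rw [← Matrix.spectrum_toLin', ← Module.End.hasEigenvalue_iff_mem_spectrum] at hlam
  obtain ⟨v, hv⟩ := hlam.exists_hasEigenvector
  have hv0 : v ≠ 0 := hv.2
  have hAv : (A.map (algebraMap ℝ ℂ)) *ᵥ v = lam • v := by
    have := hv.apply_eq_smul
    rwa [Matrix.toLin'_apply] at this
  have hinj : Function.Injective P.mulVec := by
    rw [Matrix.mulVec_injective_iff, linearIndependent_iff_card_eq_finrank_span,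
      Set.finrank, ← Matrix.rank_eq_finrank_span_cols, hrank, Fintype.card_fin]
  have hw0 : (P.map (algebraMap ℝ ℂ)) *ᵥ v ≠ 0 := by
    intro h
    have h1 : P *ᵥ (fun j => (v j).re) = 0 := by
      ext i
      have := congrArg Complex.re (congrFun h i)
      simpa [Matrix.mulVec, dotProduct] using this
    have h2 : P *ᵥ (fun j => (v j).im) = 0 := by
      ext i
      have := congrArg Complex.im (congrFun h i)
      simpa [Matrix.mulVec, dotProduct] using this
    have h1' := hinj (h1.trans (Matrix.mulVec_zero P).symm)
    have h2' := hinj (h2.trans (Matrix.mulVec_zero P).symm)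
    apply hv0
    ext j
    exact Complex.ext (congrFun h1' j) (congrFun h2' j)
  have hQw : (Q.map (algebraMap ℝ ℂ)) *ᵥ ((P.map (algebraMap ℝ ℂ)) *ᵥ v)
      = lam • ((P.map (algebraMap ℝ ℂ)) *ᵥ v) := by
    rw [Matrix.mulVec_mulVec, ← Matrix.map_mul, ← hPA, Matrix.map_mul,
      ← Matrix.mulVec_mulVec, hAv, Matrix.mulVec_smul]
  have hE : Module.End.HasEigenvalue (Matrix.toLin' (Q.map (algebraMap ℝ ℂ))) lam := by
    apply Module.End.hasEigenvalue_of_hasEigenvector (x := (P.map (algebraMap ℝ ℂ)) *ᵥ v)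
    refine ⟨?_, hw0⟩
    rw [Module.End.mem_eigenspace_iff, Matrix.toLin'_apply, hQw]
  obtain ⟨k, hk⟩ := eigenvalue_mem_ball hE
  have hle : Q k k + ∑ j ∈ Finset.univ.filter (fun j => j ≠ k), |Q k j| ≤ muInf Q :=
    le_ciSup (f := fun i => Q i i + ∑ j ∈ Finset.univ.filter (fun j => j ≠ i), |Q i j|)
      (Set.finite_range _).bddAbove k
  rw [mem_closedBall_iff_norm] at hk
  have hre := (Complex.re_le_norm _).trans hk
  have hs : Finset.univ.filter (fun j => j ≠ k) = Finset.univ.erase k := by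
    ext j; simp
  rw [hs] at hle
  simp [-Finset.sum_erase_eq_sub] at hre
  linarith
end

section
/- Let A ∈ ℝ^{n×n} be such that every complex eigenvalue λ of A satisfies Re(λ) < 0 (A is Hurwitz stable). Then there exist an integer m ≥ n, a real matrix P ∈ ℝ^{m×n} of full column rank (rank(P) = n), and a real matrix Q ∈ ℝ^{m×m} such that P·A = Q·P and μ_∞(Q) < 0. -/
open Matrix Finset

open scoped NNReal ENNReal in
attribute [local instance] Matrix.linftyOpNormedRing Matrix.linftyOpNormedAlgebra in
lemma exists_pow_small {n : ℕ} [NeZero n] (B : Matrix (Fin n) (Fin n) ℝ)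
    (hB : ∀ z ∈ spectrum ℂ (B.map (algebraMap ℝ ℂ)), ‖z‖ < 1) :
    ∃ N : ℕ, 0 < N ∧ ∀ i, ∑ j, |(B ^ N) i j| < 1 / 2 := by
  set C : Matrix (Fin n) (Fin n) ℂ := B.map (algebraMap ℝ ℂ) with hC
  have : CompleteSpace (Matrix (Fin n) (Fin n) ℂ) := FiniteDimensional.complete ℂ _
  have h1 : spectralRadius ℂ C < (1 : ℝ≥0) :=
    spectrum.spectralRadius_lt_of_forall_lt C (fun z hz => by
      have := hB z hz
      exact_mod_cast this)
  obtain ⟨r, hr1, hr2⟩ := ENNReal.lt_iff_exists_nnreal_btwn.1 h1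
  have hr2' : r < 1 := by exact_mod_cast hr2
  have h2 := (spectrum.pow_nnnorm_pow_one_div_tendsto_nhds_spectralRadius C).eventually_lt_const hr1
  have h3 : ∀ᶠ k : ℕ in Filter.atTop, r ^ k < 1 / 2 :=
    (tendsto_pow_atTop_nhds_zero_of_lt_one zero_le hr2').eventually_lt_const (by norm_num)
  obtain ⟨N, hN1, hN2, hN3⟩ := (h2.and (h3.and (Filter.eventually_gt_atTop 0))).exists
  refine ⟨N, hN3, fun i => ?_⟩
  have hN3' : (0:ℝ) < N := by exact_mod_cast hN3
  have h4 : (‖C ^ N‖₊ : ℝ≥0∞) < (r : ℝ≥0∞) ^ N := by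
    have := ENNReal.rpow_lt_rpow hN1 hN3'
    rw [← ENNReal.rpow_mul, one_div, inv_mul_cancel₀ hN3'.ne', ENNReal.rpow_one,
      ENNReal.rpow_natCast] at this
    exact this
  have h5 : ‖C ^ N‖₊ < 1 / 2 := by
    refine lt_trans ?_ hN2
    exact_mod_cast h4
  rw [Matrix.linfty_opNNNorm_def] at h5
  have h6 : ∑ j, ‖(C ^ N) i j‖₊ < 1 / 2 :=
    lt_of_le_of_lt (Finset.le_sup (f := fun i => ∑ j, ‖(C ^ N) i j‖₊) (Finset.mem_univ i)) h5
  have h7 : C ^ N = (B ^ N).map (algebraMap ℝ ℂ) := by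
    rw [hC]
    exact (map_pow ((algebraMap ℝ ℂ).mapMatrix) B N).symm
  have h8 : ((∑ j, ‖(C ^ N) i j‖₊ : ℝ≥0) : ℝ) < ((1 / 2 : ℝ≥0) : ℝ) := by exact_mod_cast h6
  rw [h7] at h8
  simpa using h8

lemma exists_step {n : ℕ} [NeZero n] (A : Matrix (Fin n) (Fin n) ℝ)
    (hA : ∀ lam ∈ spectrum ℂ (A.map (algebraMap ℝ ℂ)), lam.re < 0) :
    ∃ h : ℝ, 0 < h ∧
      ∀ z ∈ spectrum ℂ ((1 + h • A).map (algebraMap ℝ ℂ)), ‖z‖ < 1 := by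
  set C : Matrix (Fin n) (Fin n) ℂ := A.map (algebraMap ℝ ℂ) with hC
  have hfin : (spectrum ℂ C).Finite := Matrix.finite_spectrum C
  have key : ∀ lam ∈ spectrum ℂ C, ∀ᶠ h : ℝ in nhdsWithin 0 (Set.Ioi 0),
      ‖1 + (h : ℂ) * lam‖ < 1 := by
    intro lam hl
    have hre := hA lam hl
    have hc : Filter.Tendsto (fun h : ℝ => 2 * lam.re + h * (lam.re ^ 2 + lam.im ^ 2))
        (nhdsWithin 0 (Set.Ioi 0)) (nhds (2 * lam.re)) := by
      have : Continuous (fun h : ℝ => 2 * lam.re + h * (lam.re ^ 2 + lam.im ^ 2)) := by fun_prop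
      have h2 := this.tendsto 0
      simp only [zero_mul, add_zero] at h2
      exact h2.mono_left nhdsWithin_le_nhds
    filter_upwards [hc.eventually_lt_const (show 2 * lam.re < 0 by linarith),
      self_mem_nhdsWithin] with h h1 h2
    have h2' : 0 < h := h2
    have h3 : ‖1 + (h : ℂ) * lam‖ ^ 2 < 1 := by
      rw [← Complex.normSq_eq_norm_sq, Complex.normSq_apply]
      simp
      nlinarith [mul_neg_of_pos_of_neg h2' h1]
    exact (sq_lt_one_iff₀ (norm_nonneg _)).1 h3
  have key2 := (hfin.eventually_all).2 key
  obtain ⟨h, hh1, hh2⟩ := (key2.and self_mem_nhdsWithin).exists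
  have hh : 0 < h := hh2
  refine ⟨h, hh, fun z hz => ?_⟩
  have e : (1 + h • A).map (algebraMap ℝ ℂ)
      = algebraMap ℂ (Matrix (Fin n) (Fin n) ℂ) 1 + (Units.mk0 (h : ℂ) (by exact_mod_cast hh.ne')) • C := by
    ext i j
    by_cases hij : i = j <;> simp [hC, Matrix.one_apply, hij, Units.smul_def]
  rw [e, ← spectrum.singleton_add_eq, spectrum.unit_smul_eq_smul] at hz
  obtain ⟨a, ha, b, hb, rfl⟩ := Set.mem_add.1 hz
  obtain ⟨lam, hl, rfl⟩ := hb
  rw [Set.mem_singleton_iff] at ha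
  subst ha
  exact hh1 lam hl

/-- every Hurwitz stable real matrix admits a full-column-rank `P` (possibly
lifted, `m ≥ n`) and `Q` with `P A = Q P` and `μ_∞(Q) < 0`. -/
theorem polyhedral_lyapunov_of_hurwitz {n : ℕ} (A : Matrix (Fin n) (Fin n) ℝ)
    (hA : ∀ lam ∈ spectrum ℂ (A.map (algebraMap ℝ ℂ)), lam.re < 0) :
    ∃ (m : ℕ) (P : Matrix (Fin m) (Fin n) ℝ) (Q : Matrix (Fin m) (Fin m) ℝ),
      n ≤ m ∧ P.rank = n ∧ P * A = Q * P ∧ muInf Q < 0 := by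
  rcases Nat.eq_zero_or_pos n with rfl | hn
  · refine ⟨1, 0, -1, by simp, by simp, ?_, ?_⟩
    · ext i j
      exact j.elim0
    · have : ∀ i : Fin 1, ∑ j ∈ Finset.univ.filter (fun j => j ≠ i),
          |(-1 : Matrix (Fin 1) (Fin 1) ℝ) i j| = 0 := by
        intro i
        apply Finset.sum_eq_zero
        intro j hj
        exact absurd (Subsingleton.elim j i) (Finset.mem_filter.1 hj).2
      simp only [muInf, this]
      simp
  have : NeZero n := ⟨hn.ne'⟩
  obtain ⟨h, hh, hsp⟩ := exists_step A hA
  set B := 1 + h • A with hB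
  obtain ⟨N, hN, hrow⟩ := exists_pow_small B hsp
  have hN' : (0:ℝ) < N := by exact_mod_cast hN
  let w : ℕ → ℝ := fun k => 1 + k / N
  have hw0 : ∀ k, 0 < w k := fun k => by positivity
  have hw1 : ∀ k, w k < w (k + 1) := fun k => by
    simp only [w, Nat.cast_add, Nat.cast_one]
    gcongr
    linarith
  have hw2 : ∀ k, k < N → w k < 2 := fun k hk => by
    have : (k:ℝ) / N < 1 := (div_lt_one hN').2 (by exact_mod_cast hk)
    simp only [w]; linarith
  let P' : Fin N × Fin n → Fin n → ℝ := fun p => w p.1 • (B ^ (p.1 : ℕ)) p.2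
  have hP'row : ∀ p, P' p ᵥ* B = w p.1 • (B ^ ((p.1 : ℕ) + 1)) p.2 := by
    intro p
    simp only [P', Matrix.smul_vecMul, pow_succ]
    rfl
  have hstep : ∀ p, ∃ t : Fin N × Fin n → ℝ, ∑ q, |t q| < 1 ∧
      P' p ᵥ* B = ∑ q, t q • P' q := by
    rintro ⟨k, i⟩
    by_cases hk : (k : ℕ) + 1 < N
    · refine ⟨Pi.single (⟨k + 1, hk⟩, i) (w k / w (k + 1)), ?_, ?_⟩
      · rw [Finset.sum_eq_single (⟨k + 1, hk⟩, i)]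
        · rw [Pi.single_eq_same, abs_of_pos (div_pos (hw0 _) (hw0 _)), div_lt_one (hw0 _)]
          exact hw1 _
        · intro b _ hb
          rw [Pi.single_eq_of_ne hb, abs_zero]
        · simp
      · rw [Finset.sum_eq_single (⟨k + 1, hk⟩, i)]
        · rw [Pi.single_eq_same, hP'row]
          simp only [P', smul_smul]
          rw [div_mul_cancel₀ _ (hw0 _).ne']
        · intro b _ hb
          rw [Pi.single_eq_of_ne hb, zero_smul]
        · simp
    · have hk' : (k : ℕ) + 1 = N := by have := k.2; omega
      refine ⟨fun q => if q.1 = ⟨0, hN⟩ then w k * (B ^ N) i q.2 else 0, ?_, ?_⟩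
      · rw [Fintype.sum_prod_type, Finset.sum_eq_single ⟨0, hN⟩]
        · simp only [if_true, abs_mul, ← Finset.mul_sum, abs_of_pos (hw0 k)]
          have h1 := hrow i
          have h2 := hw2 k k.2
          have h3 := hw0 k
          nlinarith
        · intro b _ hb
          simp [hb]
        · simp
      · rw [hP'row, Fintype.sum_prod_type, Finset.sum_eq_single ⟨0, hN⟩]
        · simp only [hk']
          ext j
          simp [P', w, Finset.sum_apply, Matrix.one_apply]
        · intro b _ hb
          simp [hb]
        · simp
  choose T hT1 hT2 using hstep
  let e := (finProdFinEquiv : Fin N × Fin n ≃ Fin (N * n)).symm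
  let P : Matrix (Fin (N * n)) (Fin n) ℝ := Matrix.of fun a => P' (e a)
  let Q : Matrix (Fin (N * n)) (Fin (N * n)) ℝ := Matrix.of fun a b =>
    h⁻¹ * (T (e a) (e b) - if a = b then 1 else 0)
  have hrank : P.rank = n := by
    apply le_antisymm (Matrix.rank_le_width P)
    have h1 := Matrix.rank_submatrix_le P (fun i => e.symm (⟨0, hN⟩, i)) id
    have h2 : P.submatrix (fun i => e.symm (⟨0, hN⟩, i)) id = 1 := by
      ext i j
      simp [P, P', w]
    rw [h2, Matrix.rank_one] at h1
    simpa using h1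
  refine ⟨N * n, P, Q, ?_, hrank, ?_, ?_⟩
  · exact Nat.le_mul_of_pos_left n hN
  · ext a j
    have h1 := congrFun (hT2 (e a)) j
    have h2 : (P' (e a) ᵥ* B) j = P a j + h * (P * A) a j := by
      rw [hB, Matrix.vecMul_add, Matrix.vecMul_one, Matrix.vecMul_smul]
      rfl
    have h3 : (Q * P) a j = h⁻¹ * ((∑ q, T (e a) q • P' q) j - P a j) := by
      rw [Matrix.mul_apply, Finset.sum_apply, ← Equiv.sum_comp e]
      simp only [Q, Matrix.of_apply, mul_assoc, ← Finset.mul_sum, sub_mul, Finset.sum_sub_distrib,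
        ite_mul, one_mul, zero_mul, Finset.sum_ite_eq, Finset.mem_univ, if_true]
      rfl
    rw [h3, ← h1, h2]
    field_simp
    ring
  · have : Nonempty (Fin (N * n)) := ⟨⟨0, Nat.mul_pos hN hn⟩⟩
    obtain ⟨a, ha⟩ := exists_eq_ciSup_of_finite
      (f := fun i => Q i i + ∑ j ∈ Finset.univ.filter (fun j => j ≠ i), |Q i j|)
    rw [muInf, ← ha]
    have h1 : ∑ j ∈ Finset.univ.filter (fun j => j ≠ a), |Q a j|
        = h⁻¹ * ∑ j ∈ Finset.univ.filter (fun j => j ≠ a), |T (e a) (e j)| := by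
      rw [Finset.mul_sum]
      apply Finset.sum_congr rfl
      intro j hj
      have hj' := (Finset.mem_filter.1 hj).2
      simp [Q, hj'.symm, abs_mul, abs_of_pos hh]
    have h2 : ∑ j, |T (e a) (e j)| = |T (e a) (e a)| +
        ∑ j ∈ Finset.univ.filter (fun j => j ≠ a), |T (e a) (e j)| := by
      rw [Finset.filter_ne']
      exact (Finset.add_sum_erase _ (fun j => |T (e a) (e j)|) (Finset.mem_univ a)).symm
    have h3 : ∑ j, |T (e a) (e j)| < 1 := by
      rw [Equiv.sum_comp e (fun q => |T (e a) q|)]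
      exact hT1 _
    have h4 : Q a a = h⁻¹ * (T (e a) (e a) - 1) := by simp [Q]
    have h5 := le_abs_self (T (e a) (e a))
    simp only [h1, h4, ← mul_add]
    exact mul_neg_of_pos_of_neg (inv_pos.2 hh) (by linarith)
end

section
/- Let A ∈ ℝ^{n×n}. If there exist a real matrix P ∈ ℝ^{m×n} of full column rank (rank(P) = n, m ≥ n) and a real matrix Q ∈ ℝ^{m×m} such that P·A = Q·P and ‖Q‖_∞ < 1, then every complex eigenvalue λ of A satisfies |λ| < 1; equivalently, the discrete-time linear system x_{t+1} = A x_t is asymptotically stable. -/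
open Matrix Finset

/-- existence of full-column-rank `P` and `Q` with `P A = Q P`, `‖Q‖_∞ < 1`
implies Schur stability of `A`. -/
theorem schur_of_polyhedral_lyapunov {n m : ℕ} (hnm : n ≤ m)
    (A : Matrix (Fin n) (Fin n) ℝ) (P : Matrix (Fin m) (Fin n) ℝ)
    (Q : Matrix (Fin m) (Fin m) ℝ) (hrank : P.rank = n)
    (hPA : P * A = Q * P) (hQ : normInf Q < 1) :
    ∀ lam ∈ spectrum ℂ (A.map (algebraMap ℝ ℂ)), ‖lam‖ < 1 := by
  intro lam hlam
  have hinj : Function.Injective P.mulVecLin := by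
    rw [← LinearMap.ker_eq_bot, ← Submodule.finrank_eq_zero (R := ℝ)]
    have h := LinearMap.finrank_range_add_finrank_ker P.mulVecLin
    have h2 : Module.finrank ℝ (LinearMap.range P.mulVecLin) = n := hrank
    rw [h2, Module.finrank_fin_fun] at h
    omega
  obtain ⟨L, hL⟩ := LinearMap.exists_leftInverse_of_injective P.mulVecLin
    (LinearMap.ker_eq_bot.mpr hinj)
  have hLP : LinearMap.toMatrix' L * P = 1 := by
    have := congrArg LinearMap.toMatrix' hL
    rw [LinearMap.toMatrix'_comp, LinearMap.toMatrix'_id] at this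
    rw [← this, ← Matrix.toLin'_apply', LinearMap.toMatrix'_toLin']
  generalize LinearMap.toMatrix' L = N at hLP
  have hev : Module.End.HasEigenvalue (Matrix.toLin' (A.map (algebraMap ℝ ℂ))) lam := by
    rw [Module.End.hasEigenvalue_iff_mem_spectrum, Matrix.spectrum_toLin']
    exact hlam
  obtain ⟨v, hv⟩ := hev.exists_hasEigenvector
  have hAv : (A.map (algebraMap ℝ ℂ)) *ᵥ v = lam • v := by
    have := hv.apply_eq_smul
    rwa [Matrix.toLin'_apply] at this
  have hv0 : v ≠ 0 := hv.2
  set w : Fin m → ℂ := (P.map (algebraMap ℝ ℂ)) *ᵥ v with hw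
  have hw0 : w ≠ 0 := by
    intro h
    apply hv0
    have h1 : (N.map (algebraMap ℝ ℂ)) *ᵥ w = v := by
      rw [hw, Matrix.mulVec_mulVec, ← Matrix.map_mul, hLP,
        Matrix.map_one _ (map_zero _) (map_one _), Matrix.one_mulVec]
    rw [← h1, h, Matrix.mulVec_zero]
  have hQw : (Q.map (algebraMap ℝ ℂ)) *ᵥ w = lam • w := by
    rw [hw, Matrix.mulVec_mulVec, ← Matrix.map_mul, ← hPA, Matrix.map_mul,
      ← Matrix.mulVec_mulVec, hAv, Matrix.mulVec_smul]
  obtain ⟨k, hk⟩ := Function.ne_iff.mp hw0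
  obtain ⟨i, -, hi⟩ := Finset.exists_max_image Finset.univ (fun i => ‖w i‖) ⟨k, Finset.mem_univ k⟩
  have hpos : 0 < ‖w i‖ := lt_of_lt_of_le (norm_pos_iff.mpr hk) (hi k (Finset.mem_univ k))
  have hrow : ∑ j, |Q i j| ≤ normInf Q :=
    le_ciSup (f := fun i => ∑ j, |Q i j|) (Set.finite_range _).bddAbove i
  have hle : ‖lam‖ * ‖w i‖ ≤ (∑ j, |Q i j|) * ‖w i‖ := by
    have h1 := congrFun hQw i
    simp only [Matrix.mulVec, dotProduct, Pi.smul_apply, smul_eq_mul] at h1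
    rw [← norm_mul, ← h1, Finset.sum_mul]
    refine (norm_sum_le _ _).trans (Finset.sum_le_sum fun j _ => ?_)
    simp only [Matrix.map_apply, norm_mul, norm_algebraMap', Real.norm_eq_abs]
    exact mul_le_mul_of_nonneg_left (hi j (Finset.mem_univ j)) (abs_nonneg _)
  exact lt_of_le_of_lt (le_of_mul_le_mul_right hle hpos) (lt_of_le_of_lt hrow hQ)
end

section
/- Let A ∈ ℝ^{n×n} be such that every complex eigenvalue λ of A satisfies |λ| < 1 (A is Schur stable). Then there exist an integer m ≥ n, a real matrix P ∈ ℝ^{m×n} of full column rank (rank(P) = n), and a real matrix Q ∈ ℝ^{m×m} such that P·A = Q·P and ‖Q‖_∞ < 1. -/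
open Matrix Finset

open Filter Topology in
attribute [local instance] Matrix.linftyOpNormedRing Matrix.linftyOpNormedAlgebra in
theorem schur_aux {n : ℕ} (hn : 0 < n) (A : Matrix (Fin n) (Fin n) ℝ)
    (hA : ∀ lam ∈ spectrum ℂ (A.map (algebraMap ℝ ℂ)), ‖lam‖ < 1) :
    ∃ (M : ℕ) (r : ℝ), 0 < r ∧ r < 1 ∧ ∀ i, ∑ j, |(A ^ (M+1)) i j| ≤ r ^ (M+1) := by
  have : Nonempty (Fin n) := ⟨⟨0, hn⟩⟩
  set B : Matrix (Fin n) (Fin n) ℂ := A.map (algebraMap ℝ ℂ) with hB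
  have : CompleteSpace (Matrix (Fin n) (Fin n) ℂ) := FiniteDimensional.complete ℂ _
  obtain ⟨k, hk, hk2⟩ := spectrum.exists_nnnorm_eq_spectralRadius B
  have h1 : spectralRadius ℂ B < 1 := by
    rw [← hk2]
    have := hA k hk
    exact_mod_cast this
  obtain ⟨r, hr1, hr2⟩ := ENNReal.lt_iff_exists_nnreal_btwn.1 h1
  have hr0 : 0 < r := by
    have := lt_of_le_of_lt (zero_le) hr1
    exact_mod_cast this
  have ht := spectrum.pow_nnnorm_pow_one_div_tendsto_nhds_spectralRadius B
  have he := (ht.eventually (gt_mem_nhds hr1)).and (eventually_ge_atTop 1)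
  obtain ⟨N, hN, hN1⟩ := he.exists
  obtain ⟨M, rfl⟩ : ∃ M, N = M + 1 := ⟨N - 1, by omega⟩
  refine ⟨M, r, by exact_mod_cast hr0, by exact_mod_cast hr2, fun i => ?_⟩
  have h2 : ‖B ^ (M+1)‖₊ ≤ r ^ (M+1) := by
    have h3 := ENNReal.rpow_le_rpow hN.le (z := ((M+1 : ℕ) : ℝ)) (by positivity)
    rw [← ENNReal.rpow_mul, one_div, inv_mul_cancel₀ (by positivity), ENNReal.rpow_one,
      ENNReal.rpow_natCast] at h3
    exact_mod_cast h3
  have h4 : ∑ j, ‖(B ^ (M+1)) i j‖₊ ≤ r ^ (M+1) := by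
    refine le_trans ?_ h2
    rw [Matrix.linfty_opNNNorm_def]
    exact Finset.le_sup (f := fun i => ∑ j, ‖(B ^ (M+1)) i j‖₊) (Finset.mem_univ i)
  have h5 : B ^ (M+1) = (A ^ (M+1)).map (algebraMap ℝ ℂ) := by
    rw [hB]
    exact (map_pow (RingHom.mapMatrix (algebraMap ℝ ℂ)) A (M+1)).symm
  have h6 : ∑ j, ‖(B ^ (M+1)) i j‖ ≤ (r:ℝ) ^ (M+1) := by
    have h7 := NNReal.coe_le_coe.2 h4
    push_cast at h7
    simpa only [coe_nnnorm] using h7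
  rw [h5] at h6
  simpa using h6

theorem poly_aux {n M : ℕ} (A : Matrix (Fin n) (Fin n) ℝ) (r : ℝ) (hr : 0 < r)
    (h : ∀ i, ∑ j, |(A ^ (M+1)) i j| ≤ r ^ (M+1))
    (P : Matrix (Fin (M+1) × Fin n) (Fin n) ℝ)
    (hP : P = Matrix.of fun p j => (r⁻¹) ^ (p.1 : ℕ) * (A ^ (p.1 : ℕ)) p.2 j)
    (p : Fin (M+1) × Fin n) :
    ∃ q : Fin (M+1) × Fin n → ℝ, (∀ j, (P * A) p j = ∑ x, q x * P x j) ∧ ∑ x, |q x| ≤ r := by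
  obtain ⟨k, i⟩ := p
  have hPA : ∀ j, (P * A) (k, i) j = (r⁻¹) ^ (k : ℕ) * (A ^ ((k : ℕ) + 1)) i j := by
    intro j
    rw [pow_succ A, Matrix.mul_apply, Matrix.mul_apply, Finset.mul_sum]
    simp [hP, mul_assoc]
  by_cases hk : (k : ℕ) < M
  · refine ⟨Pi.single (⟨k + 1, by omega⟩, i) r, fun j => ?_, ?_⟩
    · rw [hPA, Finset.sum_eq_single (⟨(k:ℕ) + 1, by omega⟩, i)]
      · simp only [Pi.single_eq_same, hP, Matrix.of_apply, pow_succ (r⁻¹)]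
        field_simp
      · intro b _ hb
        simp [Pi.single_eq_of_ne hb]
      · simp
    · rw [Finset.sum_eq_single (⟨(k:ℕ) + 1, by omega⟩, i)]
      · simp [abs_of_pos hr]
      · intro b _ hb
        simp [Pi.single_eq_of_ne hb]
      · simp
  · have hkM : (k : ℕ) = M := by omega
    refine ⟨fun x => if x.1 = 0 then (r⁻¹) ^ M * (A ^ (M+1)) i x.2 else 0, fun j => ?_, ?_⟩
    · rw [hPA, Fintype.sum_prod_type, Finset.sum_eq_single 0]
      · simp [hP, hkM, Matrix.one_apply]
      · intro b _ hb
        simp [hb]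
      · simp
    · rw [Fintype.sum_prod_type, Finset.sum_eq_single 0]
      · simp only [if_true, abs_mul, ← Finset.mul_sum]
        rw [abs_of_pos (by positivity)]
        calc (r⁻¹) ^ M * ∑ j, |(A ^ (M+1)) i j| ≤ (r⁻¹) ^ M * r ^ (M+1) := by
              gcongr
              exact h i
          _ = r := by
              rw [pow_succ, ← mul_assoc, ← mul_pow, inv_mul_cancel₀ hr.ne', one_pow, one_mul]
      · intro b _ hb
        simp [hb]
      · simp

/-- every Schur stable real matrix admits a full-column-rank `P` (possibly
lifted, `m ≥ n`) and `Q` with `P A = Q P` and `‖Q‖_∞ < 1`. -/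
theorem polyhedral_lyapunov_of_schur {n : ℕ} (A : Matrix (Fin n) (Fin n) ℝ)
    (hA : ∀ lam ∈ spectrum ℂ (A.map (algebraMap ℝ ℂ)), ‖lam‖ < 1) :
    ∃ (m : ℕ) (P : Matrix (Fin m) (Fin n) ℝ) (Q : Matrix (Fin m) (Fin m) ℝ),
      n ≤ m ∧ P.rank = n ∧ P * A = Q * P ∧ normInf Q < 1 := by
  rcases Nat.eq_zero_or_pos n with rfl | hn
  · refine ⟨0, 0, 0, le_rfl, by simp, by simp, ?_⟩
    simp [normInf]
  obtain ⟨M, r, hr0, hr1, h⟩ := schur_aux hn A hA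
  obtain ⟨P, hP⟩ : ∃ P : Matrix (Fin (M+1) × Fin n) (Fin n) ℝ,
    P = Matrix.of fun p j => (r⁻¹) ^ (p.1 : ℕ) * (A ^ (p.1 : ℕ)) p.2 j := ⟨_, rfl⟩
  choose q hq1 hq2 using poly_aux A r hr0 h P hP
  let e : Fin ((M+1) * n) ≃ Fin (M+1) × Fin n := finProdFinEquiv.symm
  refine ⟨(M+1) * n, P.submatrix e id, Matrix.of fun a b => q (e a) (e b),
    Nat.le_mul_of_pos_left n (by omega), ?_, ?_, ?_⟩
  · have hinj : Function.Injective (P.submatrix e id).mulVecLin := by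
      intro v w hvw
      ext i
      have := congrFun hvw (e.symm (0, i))
      simpa [Matrix.mulVec, dotProduct, hP, Matrix.one_apply] using this
    rw [Matrix.rank, LinearMap.finrank_range_of_inj hinj]
    simp
  · ext a j
    have := hq1 (e a) j
    rw [← Equiv.sum_comp e] at this
    simpa [Matrix.mul_apply] using this
  · refine lt_of_le_of_lt ?_ hr1
    refine Real.iSup_le (fun a => ?_) hr0.le
    have := hq2 (e a)
    rw [← Equiv.sum_comp e] at this
    simpa using this
end

section
/- Let A ∈ ℝ^{n×n}, P ∈ ℝ^{m×n}, and Q ∈ ℝ^{m×m} satisfy P·A = Q·P. Let x : ℝ → ℝ^n be a solution of the continuous-time linear system, i.e., x is differentiable with x'(t) = A x(t) for all t. Then for all t ≥ 0, ‖P x(t)‖_∞ ≤ exp(μ_∞(Q)·t) · ‖P x(0)‖_∞. In particular, if μ_∞(Q) < 0, the polyhedral Lyapunov function V(x) = ‖P x‖_∞ decays exponentially along trajectories. -/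
open Matrix Finset

lemma aux_vecNormInf_eq {m : ℕ} (v : Fin m → ℝ) : vecNormInf v = ‖v‖ := by
  unfold vecNormInf
  apply le_antisymm
  · apply Real.iSup_le
    · intro i
      simpa using norm_le_pi_norm v i
    · positivity
  · rw [pi_norm_le_iff_of_nonneg (Real.iSup_nonneg fun i => abs_nonneg _)]
    intro i
    exact le_ciSup (f := fun i => |v i|) (Set.finite_range _).bddAbove i

lemma aux_row_le {m : ℕ} (Q : Matrix (Fin m) (Fin m) ℝ) (i : Fin m) :
    Q i i + ∑ j ∈ Finset.univ.erase i, |Q i j| ≤ muInf Q := by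
  have h := le_ciSup (f := fun i => Q i i + ∑ j ∈ Finset.univ.filter (fun j => j ≠ i), |Q i j|)
    (Set.finite_range _).bddAbove i
  rw [← Finset.filter_ne']
  exact h

lemma aux_step {m : ℕ} (Q : Matrix (Fin m) (Fin m) ℝ) (v : Fin m → ℝ) (h : ℝ) (hh : 0 ≤ h)
    (hd : ∀ i, 0 ≤ 1 + h * Q i i) (i : Fin m) :
    |v i + h * Q.mulVec v i| ≤ ‖v‖ + h * (muInf Q * ‖v‖) := by
  have hv : ∀ j, |v j| ≤ ‖v‖ := fun j => by simpa using norm_le_pi_norm v j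
  have e : Q.mulVec v i = Q i i * v i + ∑ j ∈ Finset.univ.erase i, Q i j * v j := by
    rw [Finset.add_sum_erase _ (fun j => Q i j * v j) (Finset.mem_univ i)]
    rfl
  have e1 : |∑ j ∈ Finset.univ.erase i, Q i j * v j| ≤
      (∑ j ∈ Finset.univ.erase i, |Q i j|) * ‖v‖ := by
    rw [Finset.sum_mul]
    refine (Finset.abs_sum_le_sum_abs _ _).trans (Finset.sum_le_sum fun j _ => ?_)
    rw [abs_mul]
    exact mul_le_mul_of_nonneg_left (hv j) (abs_nonneg _)
  have e2 : |(1 + h * Q i i) * v i| ≤ (1 + h * Q i i) * ‖v‖ := by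
    rw [abs_mul, abs_of_nonneg (hd i)]
    exact mul_le_mul_of_nonneg_left (hv i) (hd i)
  have e3 := mul_le_mul_of_nonneg_left
    (mul_le_mul_of_nonneg_right (aux_row_le Q i) (norm_nonneg v)) hh
  rw [e]
  calc _ = |(1 + h * Q i i) * v i + h * ∑ j ∈ Finset.univ.erase i, Q i j * v j| := by
        congr 1; ring
    _ ≤ |(1 + h * Q i i) * v i| + h * |∑ j ∈ Finset.univ.erase i, Q i j * v j| := by
        refine (abs_add_le _ _).trans ?_
        rw [abs_mul h, abs_of_nonneg hh]
    _ ≤ (1 + h * Q i i) * ‖v‖ + h * ((∑ j ∈ Finset.univ.erase i, |Q i j|) * ‖v‖) :=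
        add_le_add e2 (mul_le_mul_of_nonneg_left e1 hh)
    _ ≤ _ := by linarith

lemma aux_slope {m : ℕ} (Q : Matrix (Fin m) (Fin m) ℝ) (y : ℝ → Fin m → ℝ) (t : ℝ)
    (hy : HasDerivAt y (Q.mulVec (y t)) t) (r : ℝ) (hr : muInf Q * ‖y t‖ < r) :
    ∀ᶠ z in nhdsWithin t (Set.Ioi t), (z - t)⁻¹ * (‖y z‖ - ‖y t‖) < r := by
  obtain ⟨c, hc1, hc2⟩ := exists_between hr
  have h1 := hy.isLittleO.def (sub_pos.2 hc1)
  have h2 : ∀ᶠ z in nhds t, ∀ i, 0 < 1 + (z - t) * Q i i := by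
    rw [Filter.eventually_all]
    intro i
    have : ContinuousAt (fun z => 1 + (z - t) * Q i i) t := by fun_prop
    exact this.eventually (lt_mem_nhds (by simp))
  filter_upwards [nhdsWithin_le_nhds h1, nhdsWithin_le_nhds h2, self_mem_nhdsWithin] with z h1 h2 hz
  have hz : 0 < z - t := sub_pos.2 hz
  rw [Real.norm_of_nonneg hz.le] at h1
  have h3 : ‖y t + (z - t) • Q.mulVec (y t)‖ ≤ ‖y t‖ + (z - t) * (muInf Q * ‖y t‖) := by
    rcases isEmpty_or_nonempty (Fin m) with hm | hm
    · have : ∀ v : Fin m → ℝ, ‖v‖ = 0 := fun v => by rw [Subsingleton.elim v 0, norm_zero]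
      simp [this]
    · rw [pi_norm_le_iff_of_nonempty]
      intro i
      exact aux_step Q (y t) (z - t) hz.le (fun i => (h2 i).le) i
  have h4 : ‖y z‖ ≤ ‖y z - y t - (z - t) • Q.mulVec (y t)‖ + ‖y t + (z - t) • Q.mulVec (y t)‖ := by
    refine le_trans (le_of_eq ?_) (norm_add_le _ _)
    congr 1; abel
  refine lt_of_le_of_lt ?_ hc2
  rw [inv_mul_le_iff₀ hz]
  linarith

/-- along any solution of `x' = A x`, the polyhedral Lyapunov function
`V(x) = ‖P x‖_∞` satisfies `V(x(t)) ≤ exp(μ_∞(Q) t) V(x(0))` for `t ≥ 0`, when `P A = Q P`. -/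
theorem polyhedral_lyapunov_decay_CT {n m : ℕ}
    (A : Matrix (Fin n) (Fin n) ℝ) (P : Matrix (Fin m) (Fin n) ℝ)
    (Q : Matrix (Fin m) (Fin m) ℝ) (hPA : P * A = Q * P)
    (x : ℝ → Fin n → ℝ) (hx : ∀ t : ℝ, HasDerivAt x (A.mulVec (x t)) t) :
    ∀ t : ℝ, 0 ≤ t →
      vecNormInf (P.mulVec (x t)) ≤
        Real.exp (muInf Q * t) * vecNormInf (P.mulVec (x 0)) := by
  intro t ht
  have hy : ∀ t, HasDerivAt (fun t => P.mulVec (x t)) (Q.mulVec (P.mulVec (x t))) t := by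
    intro t
    have h := (LinearMap.toContinuousLinearMap P.mulVecLin).hasFDerivAt.comp_hasDerivAt t (hx t)
    rw [Matrix.mulVec_mulVec, ← hPA, ← Matrix.mulVec_mulVec]
    exact h
  have hc : Continuous (fun t => P.mulVec (x t)) :=
    continuous_iff_continuousAt.2 fun t => (hy t).continuousAt
  have key := le_gronwallBound_of_liminf_deriv_right_le (f := fun t => ‖P.mulVec (x t)‖)
    (f' := fun t => muInf Q * ‖P.mulVec (x t)‖) (δ := ‖P.mulVec (x 0)‖) (K := muInf Q) (ε := 0)
    (a := 0) (b := t) hc.norm.continuousOn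
    (fun s _ r hr => (aux_slope Q (fun t => P.mulVec (x t)) s (hy s) r hr).frequently)
    le_rfl (fun s _ => by simp) t ⟨ht, le_rfl⟩
  rw [gronwallBound_ε0, sub_zero] at key
  rw [aux_vecNormInf_eq, aux_vecNormInf_eq, mul_comm]
  exact key
end

section
/- Consider the uncertain discrete-time linear system x_{t+1} = A x_t + W w_t with A ∈ ℝ^{n×n}, W ∈ ℝ^{n×n_w}, disturbance signals w : ℕ → ℝ^{n_w} satisfying w̲ ≤ w_t ≤ w̄ for all t, and initial state x̲₀ ≤ x₀ ≤ x̄₀ (all inequalities entrywise). Define the embedding system x̲_{t+1} = A⁺ x̲_t − A⁻ x̄_t + W⁺ w̲ − W⁻ w̄ and x̄_{t+1} = A⁺ x̄_t − A⁻ x̲_t + W⁺ w̄ − W⁻ w̲, initialized at (x̲₀, x̄₀). Then the state framer property holds: x̲_t ≤ x_t ≤ x̄_t for all t ∈ ℕ. -/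
open Matrix Finset

theorem framer_aux {p q : ℕ} (M : Matrix (Fin p) (Fin q) ℝ) (a b c : Fin q → ℝ)
    (h1 : a ≤ b) (h2 : b ≤ c) (i : Fin p) :
    (matPos M).mulVec a i - (matNeg M).mulVec c i ≤ M.mulVec b i ∧
    M.mulVec b i ≤ (matPos M).mulVec c i - (matNeg M).mulVec a i := by
  simp only [Matrix.mulVec, dotProduct, ← Finset.sum_sub_distrib]
  constructor
  all_goals
    apply Finset.sum_le_sum
    intro j _
    have e1 := h1 j
    have e2 := h2 j
    have p1 : 0 ≤ max (M i j) 0 := le_max_right _ _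
    have p2 : 0 ≤ max (M i j) 0 - M i j := sub_nonneg.2 (le_max_left _ _)
    simp only [matNeg, matPos, Matrix.sub_apply, Matrix.of_apply]
    nlinarith [mul_le_mul_of_nonneg_left e1 p1, mul_le_mul_of_nonneg_left e2 p1,
      mul_le_mul_of_nonneg_left e1 p2, mul_le_mul_of_nonneg_left e2 p2]

/-- state framer property of the discrete-time mixed-monotone embedding
system for `x⁺ = A x + W w` with bounded disturbance. -/
theorem embedding_framer_DT {n nw : ℕ}
    (A : Matrix (Fin n) (Fin n) ℝ) (W : Matrix (Fin n) (Fin nw) ℝ)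
    (wlo whi : Fin nw → ℝ) (w : ℕ → Fin nw → ℝ)
    (hw : ∀ t, wlo ≤ w t ∧ w t ≤ whi)
    (x xlo xhi : ℕ → Fin n → ℝ)
    (hx : ∀ t, x (t + 1) = A.mulVec (x t) + W.mulVec (w t))
    (hlo : ∀ t, xlo (t + 1) =
      (matPos A).mulVec (xlo t) - (matNeg A).mulVec (xhi t)
        + (matPos W).mulVec wlo - (matNeg W).mulVec whi)
    (hhi : ∀ t, xhi (t + 1) =
      (matPos A).mulVec (xhi t) - (matNeg A).mulVec (xlo t)
        + (matPos W).mulVec whi - (matNeg W).mulVec wlo)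
    (h0 : xlo 0 ≤ x 0 ∧ x 0 ≤ xhi 0) :
    ∀ t : ℕ, xlo t ≤ x t ∧ x t ≤ xhi t := by
  intro t
  induction t with
  | zero => exact h0
  | succ t ih =>
    rw [hx, hlo, hhi]
    constructor
    all_goals
      intro i
      have a1 := framer_aux A _ _ _ ih.1 ih.2 i
      have a2 := framer_aux W _ _ _ (hw t).1 (hw t).2 i
      simp only [Pi.add_apply, Pi.sub_apply]
      linarith [a1.1, a1.2, a2.1, a2.2]
end

section
/- (Correctness of the proposed observer, discrete-time case.) Consider the discrete-time linear system x_{t+1} = A x_t + B u_t + W w_t, y_t = C x_t + D u_t + V v_t, with state x_t ∈ ℝ^n, input u_t ∈ ℝ^s, output y_t ∈ ℝ^l, and noise signals satisfying w̲ ≤ w_t ≤ w̄ and v̲ ≤ v_t ≤ v̄ for all t ∈ ℕ (entrywise). Let L ∈ ℝ^{n×l} be any observer gain, and suppose P ∈ ℝ^{m×n} and Q ∈ ℝ^{m×m} satisfy P(A − LC) = QP. Let z̲, z̄ : ℕ → ℝ^m satisfy the observer recursions z̲_{t+1} = Q⁺ z̲_t − Q⁻ z̄_t + (PW)⁺ w̲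 − (PW)⁻ w̄ + (PLV)⁻ v̲ − (PLV)⁺ v̄ + PL y_t + P(B − LD) u_t and z̄_{t+1} = Q⁺ z̄_t − Q⁻ z̲_t + (PW)⁺ w̄ − (PW)⁻ w̲ + (PLV)⁻ v̄ − (PLV)⁺ v̲ + PL y_t + P(B − LD) u_t, with initial condition z̲₀ ≤ P x₀ ≤ z̄₀. Then z̲_t ≤ P x_t ≤ z̄_t for all t ∈ ℕ. -/
open Matrix Finset

theorem frame_aux {p q : ℕ} (M : Matrix (Fin p) (Fin q) ℝ) (a lo hi : Fin q → ℝ)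
    (h1 : lo ≤ a) (h2 : a ≤ hi) (i : Fin p) :
    (matPos M).mulVec lo i - (matNeg M).mulVec hi i ≤ M.mulVec a i ∧
    M.mulVec a i ≤ (matPos M).mulVec hi i - (matNeg M).mulVec lo i := by
  simp only [Matrix.mulVec, dotProduct, ← Finset.sum_sub_distrib]
  constructor <;> refine Finset.sum_le_sum fun j _ => ?_
  all_goals
    have e1 := h1 j
    have e2 := h2 j
    have p1 : 0 ≤ max (M i j) 0 := le_max_right _ _
    have p2 : 0 ≤ max (M i j) 0 - M i j := sub_nonneg.2 (le_max_left _ _)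
    simp only [matNeg, matPos, Matrix.sub_apply, Matrix.of_apply]
    nlinarith [mul_le_mul_of_nonneg_left e1 p1, mul_le_mul_of_nonneg_left e2 p1,
      mul_le_mul_of_nonneg_left e1 p2, mul_le_mul_of_nonneg_left e2 p2]

/-- correctness of the proposed observer (discrete-time case):
the observer states frame the transformed true state, `z̲_t ≤ P x_t ≤ z̄_t`. -/
theorem observer_correctness_DT {n m s l nw nv : ℕ}
    (A : Matrix (Fin n) (Fin n) ℝ) (B : Matrix (Fin n) (Fin s) ℝ)
    (W : Matrix (Fin n) (Fin nw) ℝ) (C : Matrix (Fin l) (Fin n) ℝ)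
    (D : Matrix (Fin l) (Fin s) ℝ) (V : Matrix (Fin l) (Fin nv) ℝ)
    (L : Matrix (Fin n) (Fin l) ℝ)
    (P : Matrix (Fin m) (Fin n) ℝ) (Q : Matrix (Fin m) (Fin m) ℝ)
    (hPQ : P * (A - L * C) = Q * P)
    (u : ℕ → Fin s → ℝ) (w : ℕ → Fin nw → ℝ) (v : ℕ → Fin nv → ℝ)
    (wlo whi : Fin nw → ℝ) (vlo vhi : Fin nv → ℝ)
    (hw : ∀ t, wlo ≤ w t ∧ w t ≤ whi) (hv : ∀ t, vlo ≤ v t ∧ v t ≤ vhi)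
    (x : ℕ → Fin n → ℝ) (y : ℕ → Fin l → ℝ)
    (hx : ∀ t, x (t + 1) = A.mulVec (x t) + B.mulVec (u t) + W.mulVec (w t))
    (hy : ∀ t, y t = C.mulVec (x t) + D.mulVec (u t) + V.mulVec (v t))
    (zlo zhi : ℕ → Fin m → ℝ)
    (hlo : ∀ t, zlo (t + 1) =
      (matPos Q).mulVec (zlo t) - (matNeg Q).mulVec (zhi t)
        + (matPos (P * W)).mulVec wlo - (matNeg (P * W)).mulVec whi
        + (matNeg (P * L * V)).mulVec vlo - (matPos (P * L * V)).mulVec vhi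
        + (P * L).mulVec (y t) + (P * (B - L * D)).mulVec (u t))
    (hhi : ∀ t, zhi (t + 1) =
      (matPos Q).mulVec (zhi t) - (matNeg Q).mulVec (zlo t)
        + (matPos (P * W)).mulVec whi - (matNeg (P * W)).mulVec wlo
        + (matNeg (P * L * V)).mulVec vhi - (matPos (P * L * V)).mulVec vlo
        + (P * L).mulVec (y t) + (P * (B - L * D)).mulVec (u t))
    (h0 : zlo 0 ≤ P.mulVec (x 0) ∧ P.mulVec (x 0) ≤ zhi 0) :
    ∀ t : ℕ, zlo t ≤ P.mulVec (x t) ∧ P.mulVec (x t) ≤ zhi t := by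
  intro t
  induction t with
  | zero => exact h0
  | succ t ih =>
    have key : P.mulVec (x (t + 1)) = Q.mulVec (P.mulVec (x t)) + (P * W).mulVec (w t)
        - (P * L * V).mulVec (v t) + (P * L).mulVec (y t)
        + (P * (B - L * D)).mulVec (u t) := by
      rw [Matrix.mulVec_mulVec, ← hPQ, hx, hy]
      simp only [Matrix.mul_sub, Matrix.sub_mulVec, Matrix.mulVec_add, Matrix.mulVec_mulVec,
        Matrix.mul_assoc]
      abel
    constructor
    all_goals
      intro i
      have f1 := frame_aux Q _ _ _ ih.1 ih.2 i
      have f2 := frame_aux (P * W) _ _ _ (hw t).1 (hw t).2 i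
      have f3 := frame_aux (P * L * V) _ _ _ (hv t).1 (hv t).2 i
      rw [key]
      first | rw [hlo] | rw [hhi]
      simp only [Pi.add_apply, Pi.sub_apply]
      linarith [f1.1, f1.2, f2.1, f2.2, f3.1, f3.2]
end

section
/- (Correctness of the proposed observer, continuous-time case.) Consider the continuous-time linear system x'(t) = A x(t) + B u(t) + W w(t), y(t) = C x(t) + D u(t) + V v(t), where x : ℝ → ℝ^n is differentiable, u, w, v are continuous signals with w̲ ≤ w(t) ≤ w̄ and v̲ ≤ v(t) ≤ v̄ for all t ≥ 0 (entrywise). Let L ∈ ℝ^{n×l}, and suppose P ∈ ℝ^{m×n} and Q ∈ ℝ^{m×m} satisfy P(A − LC) = QP. Let z̲, z̄ : ℝ → ℝ^m be differentiable and satisfy z̲'(t) = Q↑ z̲(t) − Q↓ z̄(t) + (PW)⁺ w̲ − (PW)⁻ w̄ + (PLV)⁻ v̲ − (PLV)⁺ v̄ + PL y(t) + P(B − LD) u(t) and z̄'(t) = Q↑ z̄(t) − Q↓ z̲(t) + (PW)⁺ w̄ − (PW)⁻ w̲ + (PLV)⁻ v̄ − (PLV)⁺ v̲ + PL y(t) +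 P(B − LD) u(t), with z̲(0) ≤ P x(0) ≤ z̄(0). Then z̲(t) ≤ P x(t) ≤ z̄(t) for all t ≥ 0. -/
open Matrix Finset

open Topology in
theorem metzler_nonneg {ι : Type*} [Fintype ι] (M : ι → ι → ℝ)
    (hM : ∀ i j, i ≠ j → 0 ≤ M i j) (e e' : ι → ℝ → ℝ)
    (hd : ∀ i t, HasDerivAt (e i) (e' i t) t)
    (hge : ∀ i t, 0 ≤ t → ∑ j, M i j * e j t ≤ e' i t)
    (h0 : ∀ i, 0 ≤ e i 0) : ∀ t, 0 ≤ t → ∀ i, 0 ≤ e i t := by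
  obtain ⟨K, hK⟩ : ∃ K : ℝ, ∀ i, ∑ j, M i j < K := by
    refine ⟨∑ i, |∑ j, M i j| + 1, fun i => ?_⟩
    have h1 := le_abs_self (∑ j, M i j)
    have h2 := Finset.single_le_sum (f := fun i => |∑ j, M i j|)
      (fun i _ => abs_nonneg _) (Finset.mem_univ i)
    linarith
  have key : ∀ ε : ℝ, 0 < ε → ∀ t, 0 ≤ t → ∀ i, 0 < e i t + ε * Real.exp (K * t) := by
    intro ε hε
    by_contra hcon
    push Not at hcon
    obtain ⟨t1, ht1, i1, hi1⟩ := hcon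
    have hfd : ∀ i t, HasDerivAt (fun t => e i t + ε * Real.exp (K * t))
        (e' i t + ε * (Real.exp (K * t) * (K * 1))) t := fun i t =>
      (hd i t).add ((((hasDerivAt_id t).const_mul K).exp).const_mul ε)
    have hfc : ∀ i, Continuous (fun t => e i t + ε * Real.exp (K * t)) := fun i =>
      continuous_iff_continuousAt.2 fun t => (hfd i t).continuousAt
    let S : Set ℝ := Set.Ici 0 ∩ ⋃ i, {t | e i t + ε * Real.exp (K * t) ≤ 0}
    have hSc : IsClosed S := isClosed_Ici.inter
      (isClosed_iUnion_of_finite fun i => isClosed_le (hfc i) continuous_const)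
    have hSb : BddBelow S := ⟨0, fun t ht => ht.1⟩
    have hSn : S.Nonempty := ⟨t1, ht1, Set.mem_iUnion.2 ⟨i1, hi1⟩⟩
    have hmem := hSc.csInf_mem hSn hSb
    obtain ⟨t0, ht0⟩ : ∃ t0, t0 = sInf S := ⟨_, rfl⟩
    rw [← ht0] at hmem
    obtain ⟨h0t, hi⟩ := hmem
    obtain ⟨i, hi⟩ := Set.mem_iUnion.1 hi
    simp only [Set.mem_setOf_eq, Set.mem_Ici] at hi h0t
    have hpos : 0 < t0 := by
      rcases h0t.lt_or_eq with h | h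
      · exact h
      · rw [← h] at hi
        have := h0 i
        simp at hi
        linarith
    have hbef : ∀ t, 0 ≤ t → t < t0 → ∀ j, 0 < e j t + ε * Real.exp (K * t) := by
      intro t ht htt j
      by_contra hc
      have : t ∈ S := ⟨ht, Set.mem_iUnion.2 ⟨j, not_lt.1 hc⟩⟩
      have := csInf_le hSb this
      linarith
    have hev : ∀ᶠ t in 𝓝[<] t0, 0 ≤ t ∧ t < t0 := by
      filter_upwards [Ioo_mem_nhdsLT hpos] with t ht using ⟨ht.1.le, ht.2⟩
    have hat : ∀ j, 0 ≤ e j t0 + ε * Real.exp (K * t0) := by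
      intro j
      refine ge_of_tendsto ((hfc j).continuousAt.tendsto.mono_left nhdsWithin_le_nhds
        : Filter.Tendsto _ (𝓝[<] t0) _) ?_
      filter_upwards [hev] with t ht using (hbef t ht.1 ht.2 j).le
    have hi0 : e i t0 + ε * Real.exp (K * t0) = 0 := le_antisymm hi (hat i)
    -- the derivative is nonpositive
    have hnp : e' i t0 + ε * (Real.exp (K * t0) * (K * 1)) ≤ 0 := by
      have hs := (hasDerivAt_iff_tendsto_slope.1 (hfd i t0)).mono_left
        (nhdsWithin_mono t0 (fun t (ht : t < t0) => ht.ne) : 𝓝[<] t0 ≤ _)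
      refine le_of_tendsto hs ?_
      filter_upwards [hev] with t ht
      rw [slope_def_field, hi0]
      exact div_nonpos_of_nonneg_of_nonpos (by linarith [hbef t ht.1 ht.2 i])
        (by linarith [ht.2])
    have hsum : 0 ≤ ∑ j, M i j * (e j t0 + ε * Real.exp (K * t0)) := by
      refine Finset.sum_nonneg fun j _ => ?_
      by_cases hij : i = j
      · subst hij; rw [hi0]; simp
      · exact mul_nonneg (hM i j hij) (hat j)
    simp only [mul_add, Finset.sum_add_distrib] at hsum
    rw [← Finset.sum_mul] at hsum
    have h3 := hge i t0 h0t
    have h4 : 0 < ε * Real.exp (K * t0) := by positivity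
    nlinarith [hK i, mul_pos h4 (sub_pos.2 (hK i))]
  intro t ht i
  refine le_of_forall_pos_lt_add fun δ hδ => ?_
  have := key (δ / Real.exp (K * t)) (by positivity) t ht i
  rwa [div_mul_cancel₀ _ (Real.exp_pos _).ne'] at this

theorem mulVec_nonneg_of {p q : ℕ} (M : Matrix (Fin p) (Fin q) ℝ) (hM : ∀ i j, 0 ≤ M i j)
    (a b : Fin q → ℝ) (h : a ≤ b) (i : Fin p) : M.mulVec a i ≤ M.mulVec b i := by
  simp only [Matrix.mulVec, dotProduct]
  exact Finset.sum_le_sum fun j _ => mul_le_mul_of_nonneg_left (h j) (hM i j)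

theorem matNeg_nonneg {p q : ℕ} (M : Matrix (Fin p) (Fin q) ℝ) (i j) : 0 ≤ matNeg M i j := by
  simp [matNeg, matPos]

theorem matPos_nonneg {p q : ℕ} (M : Matrix (Fin p) (Fin q) ℝ) (i j) : 0 ≤ matPos M i j := by
  simp [matPos]

theorem matPN {p q : ℕ} (M : Matrix (Fin p) (Fin q) ℝ) (a : Fin q → ℝ) (i) :
    M.mulVec a i = (matPos M).mulVec a i - (matNeg M).mulVec a i := by
  rw [matNeg, Matrix.sub_mulVec]; simp

theorem matUD {p : ℕ} (M : Matrix (Fin p) (Fin p) ℝ) (a : Fin p → ℝ) (i) :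
    M.mulVec a i = (matUp M).mulVec a i - (matDown M).mulVec a i := by
  have : M = matUp M - matDown M := by
    ext i j
    by_cases h : i = j <;> simp [matUp, matDown, h]
  conv_lhs => rw [this, Matrix.sub_mulVec]
  simp

/-- correctness of the proposed observer (continuous-time case):
the observer states frame the transformed true state, `z̲(t) ≤ P x(t) ≤ z̄(t)` for `t ≥ 0`. -/
theorem observer_correctness_CT {n m s l nw nv : ℕ}
    (A : Matrix (Fin n) (Fin n) ℝ) (B : Matrix (Fin n) (Fin s) ℝ)
    (W : Matrix (Fin n) (Fin nw) ℝ) (C : Matrix (Fin l) (Fin n) ℝ)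
    (D : Matrix (Fin l) (Fin s) ℝ) (V : Matrix (Fin l) (Fin nv) ℝ)
    (L : Matrix (Fin n) (Fin l) ℝ)
    (P : Matrix (Fin m) (Fin n) ℝ) (Q : Matrix (Fin m) (Fin m) ℝ)
    (hPQ : P * (A - L * C) = Q * P)
    (u : ℝ → Fin s → ℝ) (w : ℝ → Fin nw → ℝ) (v : ℝ → Fin nv → ℝ)
    (hu : Continuous u) (hwc : Continuous w) (hvc : Continuous v)
    (wlo whi : Fin nw → ℝ) (vlo vhi : Fin nv → ℝ)
    (hw : ∀ t : ℝ, 0 ≤ t → wlo ≤ w t ∧ w t ≤ whi)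
    (hv : ∀ t : ℝ, 0 ≤ t → vlo ≤ v t ∧ v t ≤ vhi)
    (x : ℝ → Fin n → ℝ) (y : ℝ → Fin l → ℝ)
    (hx : ∀ t : ℝ, HasDerivAt x
      (A.mulVec (x t) + B.mulVec (u t) + W.mulVec (w t)) t)
    (hy : ∀ t : ℝ, y t = C.mulVec (x t) + D.mulVec (u t) + V.mulVec (v t))
    (zlo zhi : ℝ → Fin m → ℝ)
    (hlo : ∀ t : ℝ, HasDerivAt zlo
      ((matUp Q).mulVec (zlo t) - (matDown Q).mulVec (zhi t)
        + (matPos (P * W)).mulVec wlo - (matNeg (P * W)).mulVec whi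
        + (matNeg (P * L * V)).mulVec vlo - (matPos (P * L * V)).mulVec vhi
        + (P * L).mulVec (y t) + (P * (B - L * D)).mulVec (u t)) t)
    (hhi : ∀ t : ℝ, HasDerivAt zhi
      ((matUp Q).mulVec (zhi t) - (matDown Q).mulVec (zlo t)
        + (matPos (P * W)).mulVec whi - (matNeg (P * W)).mulVec wlo
        + (matNeg (P * L * V)).mulVec vhi - (matPos (P * L * V)).mulVec vlo
        + (P * L).mulVec (y t) + (P * (B - L * D)).mulVec (u t)) t)
    (h0 : zlo 0 ≤ P.mulVec (x 0) ∧ P.mulVec (x 0) ≤ zhi 0) :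
    ∀ t : ℝ, 0 ≤ t → zlo t ≤ P.mulVec (x t) ∧ P.mulVec (x t) ≤ zhi t := by
  have hPx : ∀ t, HasDerivAt (fun t => P.mulVec (x t))
      (P.mulVec (A.mulVec (x t) + B.mulVec (u t) + W.mulVec (w t))) t := fun t =>
    (LinearMap.toContinuousLinearMap (Matrix.mulVecLin P)).hasFDerivAt.comp_hasDerivAt t (hx t)
  have hPA : ∀ t, P.mulVec (A.mulVec (x t) + B.mulVec (u t) + W.mulVec (w t))
      = Q.mulVec (P.mulVec (x t)) + (P * L).mulVec (y t) + (P * (B - L * D)).mulVec (u t)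
        + (P * W).mulVec (w t) - (P * L * V).mulVec (v t) := by
    intro t
    have h1 : Q.mulVec (P.mulVec (x t))
        = (P * A).mulVec (x t) - (P * L * C).mulVec (x t) := by
      rw [Matrix.mulVec_mulVec, ← hPQ, Matrix.mul_sub, Matrix.sub_mulVec, Matrix.mul_assoc]
    rw [h1, hy]
    simp only [Matrix.mulVec_add, Matrix.mulVec_mulVec, Matrix.mul_sub, Matrix.sub_mulVec,
      Matrix.mul_assoc]
    abel
  let M : Fin m ⊕ Fin m → Fin m ⊕ Fin m → ℝ :=
    Matrix.fromBlocks (matUp Q) (matDown Q) (matDown Q) (matUp Q)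
  let e : Fin m ⊕ Fin m → ℝ → ℝ := Sum.elim (fun i t => P.mulVec (x t) i - zlo t i)
    (fun i t => zhi t i - P.mulVec (x t) i)
  have hdn : ∀ i j, 0 ≤ matDown Q i j := by
    intro i j
    by_cases h : i = j <;> simp [matDown, h]
  have hup : ∀ i j, i ≠ j → 0 ≤ matUp Q i j := by
    intro i j h
    simp [matUp, h]
  have main := metzler_nonneg M (by
      rintro (i | i) (j | j) h
      · exact hup i j (fun h' => h (by rw [h']))
      · exact hdn i j
      · exact hdn i j
      · exact hup i j (fun h' => h (by rw [h']))) e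
    (Sum.elim (fun i t => _) (fun i t => _)) (by
      rintro (i | i) t
      · exact (hasDerivAt_pi.1 (hPx t) i).sub (hasDerivAt_pi.1 (hlo t) i)
      · exact (hasDerivAt_pi.1 (hhi t) i).sub (hasDerivAt_pi.1 (hPx t) i)) (by
      have hsub : ∀ (N : Matrix (Fin m) (Fin m) ℝ) (a b : Fin m → ℝ) (i : Fin m),
          ∑ j, N i j * (a j - b j) = N.mulVec a i - N.mulVec b i := by
        intro N a b i
        simp [Matrix.mulVec, dotProduct, mul_sub, Finset.sum_sub_distrib]
      rintro (i | i) t ht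
      all_goals
        simp only [M, e, Fintype.sum_sum_type, Sum.elim_inl, Sum.elim_inr,
          Matrix.fromBlocks_apply₁₁, Matrix.fromBlocks_apply₁₂,
          Matrix.fromBlocks_apply₂₁, Matrix.fromBlocks_apply₂₂, hsub, hPA,
          Pi.add_apply, Pi.sub_apply]
        have a1 := matPN (P * W) (w t) i
        have a2 := matPN (P * L * V) (v t) i
        have a3 := matUD Q (P.mulVec (x t)) i
        have b1 := mulVec_nonneg_of _ (matPos_nonneg (P * W)) _ _ (hw t ht).1 i
        have b2 := mulVec_nonneg_of _ (matPos_nonneg (P * W)) _ _ (hw t ht).2 i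
        have b3 := mulVec_nonneg_of _ (matNeg_nonneg (P * W)) _ _ (hw t ht).1 i
        have b4 := mulVec_nonneg_of _ (matNeg_nonneg (P * W)) _ _ (hw t ht).2 i
        have c1 := mulVec_nonneg_of _ (matPos_nonneg (P * L * V)) _ _ (hv t ht).1 i
        have c2 := mulVec_nonneg_of _ (matPos_nonneg (P * L * V)) _ _ (hv t ht).2 i
        have c3 := mulVec_nonneg_of _ (matNeg_nonneg (P * L * V)) _ _ (hv t ht).1 i
        have c4 := mulVec_nonneg_of _ (matNeg_nonneg (P * L * V)) _ _ (hv t ht).2 i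
        linarith) (by
      rintro (i | i)
      · exact sub_nonneg.2 (h0.1 i)
      · exact sub_nonneg.2 (h0.2 i))
  intro t ht
  exact ⟨fun i => sub_nonneg.1 (main t ht (Sum.inl i)),
    fun i => sub_nonneg.1 (main t ht (Sum.inr i))⟩
end

section
/- (Continuous-time block construction.) Let m ≥ 2 be an integer, let σ, ω ∈ ℝ, set θ := π/m, ξ := σ − ω·(cos θ/sin θ), and ψ := ω/sin θ. Define P_m ∈ ℝ^{m×2} by (P_m)_{k,1} = cos(kθ) and (P_m)_{k,2} = sin(kθ) for k = 0, …, m−1; define Λ := [[σ, ω], [−ω, σ]] ∈ ℝ^{2×2}; and define Q_m ∈ ℝ^{m×m} by (Q_m)_{kk} = ξ for all k, (Q_m)_{k,k+1} = ψ for k = 0, …, m−2, (Q_m)_{m−1,0} = −ψ, and all other entries zero. Then: (i) P_m · Λ = Q_m · P_m; (ii) μ_∞(Q_m) = ξ + |ψ|; and (iii) if ω > 0 and σ/ω < (cos θ − 1)/sin θ, then μ_∞(Q_m) < 0. -/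
open Matrix Finset

/-- The `m × 2` block `P_m` with rows `(cos kθ, sin kθ)`, `k = 0, …, m−1`, `θ = π/m`. -/
noncomputable def Pblock (m : ℕ) : Matrix (Fin m) (Fin 2) ℝ :=
  Matrix.of fun k j =>
    if j = 0 then Real.cos ((k : ℝ) * (Real.pi / m)) else Real.sin ((k : ℝ) * (Real.pi / m))

/-- The `m × m` block `Q_m` with `ξ` on the diagonal, `ψ` on the superdiagonal,
`−ψ` in the bottom-left corner, and zeros elsewhere. -/
def Qblock (m : ℕ) (ξ ψ : ℝ) : Matrix (Fin m) (Fin m) ℝ :=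
  Matrix.of fun k l =>
    if (l : ℕ) = (k : ℕ) then ξ
    else if (l : ℕ) = (k : ℕ) + 1 then ψ
    else if (k : ℕ) = m - 1 ∧ (l : ℕ) = 0 then -ψ
    else 0

lemma Qblock_row (m : ℕ) (hm : 2 ≤ m) (ξ ψ : ℝ) (k : Fin m) :
    ∃ j : Fin m, ∃ e : ℝ, j ≠ k ∧ Qblock m ξ ψ k k = ξ ∧ Qblock m ξ ψ k j = e * ψ ∧
      (((j : ℕ) = k + 1 ∧ e = 1) ∨ ((k : ℕ) + 1 = m ∧ (j : ℕ) = 0 ∧ e = -1)) ∧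
      ∀ l, l ≠ k → l ≠ j → Qblock m ξ ψ k l = 0 := by
  have hk := k.2
  by_cases h : (k : ℕ) + 1 < m
  · refine ⟨⟨k + 1, h⟩, 1, ?_, ?_, ?_, Or.inl ⟨rfl, rfl⟩, ?_⟩
    · intro h'
      have := congrArg Fin.val h'
      simp at this
    · simp [Qblock]
    · simp [Qblock]
    · intro l h1 h2
      have h1' : (l : ℕ) ≠ k := fun h => h1 (Fin.ext h)
      have h2' : (l : ℕ) ≠ k + 1 := fun h => h2 (Fin.ext h)
      have h3 : ¬ ((k : ℕ) = m - 1 ∧ (l : ℕ) = 0) := by omega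
      simp only [Qblock, Matrix.of_apply, if_neg h1', if_neg h2', if_neg h3]
  · refine ⟨⟨0, by omega⟩, -1, ?_, ?_, ?_, Or.inr ⟨by omega, rfl, rfl⟩, ?_⟩
    · intro h'
      have := congrArg Fin.val h'
      simp at this
      omega
    · simp [Qblock]
    · have h1' : ¬ (0 : ℕ) = k := by omega
      have h2' : ¬ (0 : ℕ) = k + 1 := by omega
      have h3 : ((k : ℕ) = m - 1 ∧ (0 : ℕ) = 0) := by omega
      simp only [Qblock, Matrix.of_apply, if_neg h1', if_neg h2']
      rw [if_pos ⟨h3.1, trivial⟩]; ring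
    · intro l h1 h2
      have h1' : (l : ℕ) ≠ k := fun h => h1 (Fin.ext h)
      have h2' : (l : ℕ) ≠ k + 1 := by have := l.2; omega
      have h3 : ¬ ((k : ℕ) = m - 1 ∧ (l : ℕ) = 0) := fun h => h2 (Fin.ext h.2)
      simp only [Qblock, Matrix.of_apply, if_neg h1', if_neg h2', if_neg h3]

lemma Qblock_sum (m : ℕ) (hm : 2 ≤ m) (ξ ψ : ℝ) (k : Fin m) (g : ℕ → ℝ) (hg : g m = - g 0) :
    ∑ l, Qblock m ξ ψ k l * g l = ξ * g k + ψ * g (k + 1) := by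
  obtain ⟨j, e, hjk, h1, h2, h3, h4⟩ := Qblock_row m hm ξ ψ k
  rw [Fintype.sum_eq_add k j hjk.symm (fun x hx => by rw [h4 x hx.1 hx.2, zero_mul]), h1, h2]
  rcases h3 with ⟨a, b⟩ | ⟨a, b, c⟩
  · rw [a, b]; ring
  · rw [a, b, c, hg]; ring

lemma Qblock_mu (m : ℕ) (hm : 2 ≤ m) (ξ ψ : ℝ) : muInf (Qblock m ξ ψ) = ξ + |ψ| := by
  have : Nonempty (Fin m) := ⟨⟨0, by omega⟩⟩
  have key : ∀ i, (Qblock m ξ ψ i i +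
      ∑ j ∈ Finset.univ.filter (fun j => j ≠ i), |Qblock m ξ ψ i j|) = ξ + |ψ| := by
    intro k
    obtain ⟨j, e, hjk, h1, h2, h3, h4⟩ := Qblock_row m hm ξ ψ k
    rw [Finset.sum_eq_single_of_mem j (by simp [hjk]) (fun x hx hxj => by
      rw [h4 x (by simpa using hx) hxj, abs_zero]), h1, h2]
    rcases h3 with ⟨a, b⟩ | ⟨a, b, c⟩
    · simp [b]
    · simp [c]
  unfold muInf
  simp only [key, ciSup_const]

/-- continuous-time block construction: (i) `P_m Λ = Q_m P_m`;
(ii) `μ_∞(Q_m) = ξ + |ψ|`; (iii) if `ω > 0` and `σ/ω < (cos θ − 1)/sin θ` then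
`μ_∞(Q_m) < 0`. -/
theorem ct_block_construction (m : ℕ) (hm : 2 ≤ m) (σ ω θ ξ ψ : ℝ)
    (hθ : θ = Real.pi / m)
    (hξ : ξ = σ - ω * (Real.cos θ / Real.sin θ))
    (hψ : ψ = ω / Real.sin θ) :
    Pblock m * !![σ, ω; -ω, σ] = Qblock m ξ ψ * Pblock m ∧
    muInf (Qblock m ξ ψ) = ξ + |ψ| ∧
    (0 < ω → σ / ω < (Real.cos θ - 1) / Real.sin θ → muInf (Qblock m ξ ψ) < 0) := by
  have hm0 : (0 : ℝ) < m := by exact_mod_cast (by omega : 0 < m)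
  have hm1 : (1 : ℝ) < m := by exact_mod_cast (by omega : 1 < m)
  have hmθ : (m : ℝ) * θ = Real.pi := by rw [hθ]; field_simp
  have hs : 0 < Real.sin θ := by
    apply Real.sin_pos_of_pos_of_lt_pi
    · rw [hθ]; exact div_pos Real.pi_pos hm0
    · rw [hθ]; exact div_lt_self Real.pi_pos hm1
  refine ⟨?_, Qblock_mu m hm ξ ψ, ?_⟩
  · ext k j
    rw [Matrix.mul_apply, Matrix.mul_apply, Fin.sum_univ_two]
    fin_cases j
    · have := Qblock_sum m hm ξ ψ k (fun n => Real.cos (n * θ)) (by simp [hmθ])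
      simp only [Pblock, ← hθ, Matrix.of_apply]
      simp
      simp at this
      rw [this, add_mul, one_mul, Real.cos_add, hξ, hψ]
      field_simp
      ring
    · have := Qblock_sum m hm ξ ψ k (fun n => Real.sin (n * θ)) (by simp [hmθ])
      simp only [Pblock, ← hθ, Matrix.of_apply]
      simp
      simp at this
      rw [this, add_mul, one_mul, Real.sin_add, hξ, hψ]
      field_simp
      ring
  · intro hω h
    rw [Qblock_mu m hm, hψ, abs_of_pos (div_pos hω hs), hξ]
    rw [div_lt_iff₀ hω] at h
    have : (Real.cos θ - 1) / Real.sin θ * ω = ω * (Real.cos θ / Real.sin θ) - ω / Real.sin θ := by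
      ring
    linarith
end
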